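/- Let (σ_{n,1})_{n∈ℕ} and (σ_{n,2})_{n∈ℕ} be two sequences of strictly positive real numbers, and for i = 1, 2 let ν_i be the infinite product on ℝ^ℕ of the centered Gaussian measures N(0, σ_{n,i}²). Then ν_1 and ν_2 are mutually absolutely continuous (ν_1 ≪ ν_2 and ν_2 ≪ ν_1) if and only if the series ∑_{n∈ℕ} (σ_{n,1}/σ_{n,2} − 1)² is convergent. -/

import Mathlib

/-!
Write `r n = σ1 n / σ2 n`, and let `L` be the log-likelihood ratio of the two laws of the first
`N` coordinates; it is a sum of one-dimensional terms.

If `∑ (r n - 1) ^ 2` converges, then `r n → 1`. The relative entropy of `N(0, a²)` with respect to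
`N(0, b²)` is at most `(1 / 2 + b / a) * (a / b - 1) ^ 2`, and relative entropies of products add
up, so the integral of `L` under the first marginal is bounded uniformly in `N`. Markov's
inequality applied to `L + exp (-L)`, which is nonnegative, turns this into
`ν1 A ≤ exp K * ν2 A + (M + 1) / K` for every cylinder `A` and every `K > 0`
(`gaussPi_apply_le`), which passes to the limit and gives `ν1 ≪ ν2`
(`absolutelyContinuous_of_marginals`). The condition is symmetric in the two sequences
(`summable_swap`), hence also `ν2 ≪ ν1`.

Conversely, the Hellinger affinity `∫ √(dμ dν)` is multiplicative, and the one of `N(0, a²)` and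
`N(0, b²)` has square `1 - (a - b) ^ 2 / (a ^ 2 + b ^ 2)`. If the series diverges, so does the
series of these defects, and the affinities of the marginals tend to `0`. The event `0 < L` then
has `ν2`-measure tending to `0` and `ν1`-measure tending to `1` (`gaussPi_separation`), which
`ν1 ≪ ν2` excludes.
-/

open MeasureTheory ProbabilityTheory Filter
open scoped ENNReal

/-! ### Densities of product measures -/

lemma lintegral_pi_prod {ι : Type*} [Fintype ι] (μ : ι → Measure ℝ)
    [∀ i, IsProbabilityMeasure (μ i)] (g : ι → ℝ → ℝ≥0∞) (hg : ∀ i, Measurable (g i)) :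
    ∫⁻ x, ∏ i, g i (x i) ∂(Measure.pi μ) = ∏ i, ∫⁻ t, g i t ∂(μ i) := by
  have hind : iIndepFun (fun i (x : ι → ℝ) => g i (x i)) (Measure.pi μ) :=
    iIndepFun_pi (fun i => (hg i).aemeasurable)
  rw [lintegral_prod_eq_prod_lintegral_of_indepFun Finset.univ
    (fun i (x : ι → ℝ) => g i (x i)) hind (fun i => (hg i).comp (measurable_pi_apply i))]
  refine Finset.prod_congr rfl fun i _ => ?_
  exact (measurePreserving_eval μ i).lintegral_comp (hg i)

lemma pi_eq_withDensity_prod {ι : Type*} [Fintype ι] (μ ν : ι → Measure ℝ)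
    [∀ i, IsProbabilityMeasure (μ i)] [∀ i, IsProbabilityMeasure (ν i)] (f : ι → ℝ → ℝ≥0∞)
    (hf : ∀ i, Measurable (f i)) (h : ∀ i, ν i = (μ i).withDensity (f i)) :
    Measure.pi ν = (Measure.pi μ).withDensity (fun x => ∏ i, f i (x i)) := by
  refine Measure.pi_eq fun s hs => ?_
  rw [withDensity_apply _ (MeasurableSet.univ_pi hs), ← lintegral_indicator (MeasurableSet.univ_pi hs)]
  have : ∀ x : ι → ℝ, (Set.univ.pi s).indicator (fun x => ∏ i, f i (x i)) x
      = ∏ i, (s i).indicator (f i) (x i) := by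
    intro x
    by_cases hx : x ∈ Set.univ.pi s
    · rw [Set.indicator_of_mem hx]
      exact Finset.prod_congr rfl fun i _ => (Set.indicator_of_mem (hx i trivial) _).symm
    · rw [Set.indicator_of_notMem hx]
      simp only [Set.mem_pi, Set.mem_univ, forall_const, not_forall] at hx
      obtain ⟨i, hi⟩ := hx
      exact (Finset.prod_eq_zero (Finset.mem_univ i) (Set.indicator_of_notMem hi _)).symm
  simp_rw [this]
  rw [lintegral_pi_prod μ _ (fun i => (hf i).indicator (hs i))]
  refine Finset.prod_congr rfl fun i _ => ?_
  rw [lintegral_indicator (hs i), h i, withDensity_apply _ (hs i)]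

/-! ### One-dimensional Gaussian measures -/

/-- The logarithm of the density of `N(0, a²)` with respect to `N(0, b²)`. -/
noncomputable def logRatio (a b x : ℝ) : ℝ :=
  Real.log (b / a) + x ^ 2 / 2 * (1 / b ^ 2 - 1 / a ^ 2)

lemma measurable_logRatio (a b : ℝ) : Measurable (logRatio a b) := by
  unfold logRatio; fun_prop

lemma logRatio_swap {a b : ℝ} (ha : 0 < a) (hb : 0 < b) (x : ℝ) :
    logRatio b a x = -logRatio a b x := by
  unfold logRatio
  rw [Real.log_div ha.ne' hb.ne', Real.log_div hb.ne' ha.ne']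
  ring

lemma toNNReal_sq_ne_zero {a : ℝ} (ha : 0 < a) : (a ^ 2).toNNReal ≠ 0 := by
  simpa using ha.ne'

lemma gaussianPDFReal_mul_exp {a b : ℝ} (ha : 0 < a) (hb : 0 < b) (x : ℝ) :
    gaussianPDFReal 0 (b ^ 2).toNNReal x * Real.exp (logRatio a b x)
      = gaussianPDFReal 0 (a ^ 2).toNNReal x := by
  have e : ∀ c : ℝ, 0 < c → gaussianPDFReal 0 (c ^ 2).toNNReal x
      = (√(2 * Real.pi))⁻¹ * (c⁻¹ * Real.exp (-x ^ 2 / (2 * c ^ 2))) := by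
    intro c hc
    rw [gaussianPDFReal, Real.coe_toNNReal _ (sq_nonneg c),
      Real.sqrt_mul (by positivity), Real.sqrt_sq hc.le, mul_inv, sub_zero, mul_assoc]
  rw [e a ha, e b hb, logRatio, Real.exp_add, Real.exp_log (by positivity)]
  have : Real.exp (-x ^ 2 / (2 * a ^ 2)) = Real.exp (-x ^ 2 / (2 * b ^ 2)) *
      Real.exp (x ^ 2 / 2 * (1 / b ^ 2 - 1 / a ^ 2)) := by
    rw [← Real.exp_add]; congr 1; field_simp; ring
  rw [this]
  field_simp

lemma gaussianReal_eq_withDensity {a b : ℝ} (ha : 0 < a) (hb : 0 < b) :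
    gaussianReal 0 (a ^ 2).toNNReal = (gaussianReal 0 (b ^ 2).toNNReal).withDensity
      (fun x => ENNReal.ofReal (Real.exp (logRatio a b x))) := by
  have hm := measurable_logRatio a b
  rw [gaussianReal_of_var_ne_zero _ (toNNReal_sq_ne_zero ha),
    gaussianReal_of_var_ne_zero _ (toNNReal_sq_ne_zero hb),
    ← withDensity_mul _ (measurable_gaussianPDF _ _) (by fun_prop)]
  congr 1
  ext x
  rw [Pi.mul_apply, gaussianPDF, gaussianPDF, ← ENNReal.ofReal_mul (gaussianPDFReal_nonneg _ _ _),
    gaussianPDFReal_mul_exp ha hb]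

/-- The left side is the Hellinger affinity of `N(0, a²)` and `N(0, b²)`, a Gaussian integral with
value `√(1 - (a - b)² / (a² + b²))`; the bound is `1 - t ≤ exp (-t)`. -/
lemma lintegral_exp_half_logRatio_le {a b : ℝ} (ha : 0 < a) (hb : 0 < b) :
    ∫⁻ x, ENNReal.ofReal (Real.exp (logRatio a b x / 2)) ∂(gaussianReal 0 (b ^ 2).toNNReal)
      ≤ ENNReal.ofReal (Real.exp (-((a - b) ^ 2 / (a ^ 2 + b ^ 2)) / 2)) := by
  have hm := measurable_logRatio a b
  set c : ℝ := (1 / a ^ 2 + 1 / b ^ 2) / 4 with hc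
  have hc0 : 0 < c := by positivity
  set C : ℝ := (√(2 * Real.pi * b ^ 2))⁻¹ * Real.exp (Real.log (b / a) / 2) with hC
  have hpt : ∀ x, gaussianPDF 0 (b ^ 2).toNNReal x * ENNReal.ofReal (Real.exp (logRatio a b x / 2))
      = ENNReal.ofReal (C * Real.exp (-c * x ^ 2)) := by
    intro x
    rw [gaussianPDF, ← ENNReal.ofReal_mul (gaussianPDFReal_nonneg _ _ _), gaussianPDFReal,
      Real.coe_toNNReal _ (sq_nonneg b), hC, mul_assoc (√(2 * Real.pi * b ^ 2))⁻¹,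
      mul_assoc (√(2 * Real.pi * b ^ 2))⁻¹, ← Real.exp_add, ← Real.exp_add]
    congr 3
    rw [logRatio, hc]
    field_simp
    ring
  rw [gaussianReal_of_var_ne_zero _ (toNNReal_sq_ne_zero hb),
    lintegral_withDensity_eq_lintegral_mul _ (measurable_gaussianPDF _ _) (by fun_prop)]
  simp only [Pi.mul_apply, hpt]
  rw [← ofReal_integral_eq_lintegral_ofReal ((integrable_exp_neg_mul_sq hc0).const_mul C)
    (ae_of_all _ fun x => by positivity), integral_const_mul, integral_gaussian]
  refine ENNReal.ofReal_le_ofReal ?_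
  rw [← pow_le_pow_iff_left₀ (by positivity) (by positivity) two_ne_zero]
  have h1 : (C * √(Real.pi / c)) ^ 2 = 1 - (a - b) ^ 2 / (a ^ 2 + b ^ 2) := by
    rw [hC, mul_pow, mul_pow, inv_pow, Real.sq_sqrt (by positivity), Real.sq_sqrt (by positivity),
      ← Real.exp_nat_mul]
    have : ((2 : ℕ) : ℝ) * (Real.log (b / a) / 2) = Real.log (b / a) := by push_cast; ring
    rw [this, Real.exp_log (by positivity), hc]
    field_simp
    ring
  have h2 : Real.exp (-((a - b) ^ 2 / (a ^ 2 + b ^ 2)) / 2) ^ 2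
      = Real.exp (-((a - b) ^ 2 / (a ^ 2 + b ^ 2))) := by
    rw [← Real.exp_nat_mul]; congr 1; push_cast; ring
  rw [h1, h2]
  linarith [Real.add_one_le_exp (-((a - b) ^ 2 / (a ^ 2 + b ^ 2)))]

/-- The integral is the relative entropy `(a² / b² - 1) / 2 + log (b / a)` of `N(0, a²)` with
respect to `N(0, b²)`; the bound is `log t ≤ t - 1` at `t = b / a`. -/
lemma integral_logRatio_le {a b : ℝ} (ha : 0 < a) (hb : 0 < b) :
    Integrable (logRatio a b) (gaussianReal 0 (a ^ 2).toNNReal) ∧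
    ∫ x, logRatio a b x ∂(gaussianReal 0 (a ^ 2).toNNReal)
      ≤ (1 / 2 + b / a) * (a / b - 1) ^ 2 := by
  have hsq : Integrable (fun x : ℝ => x ^ 2) (gaussianReal 0 (a ^ 2).toNNReal) :=
    (memLp_id_gaussianReal' (μ := 0) (v := (a ^ 2).toNNReal) 2 (by simp)).integrable_sq
  have hint : ∫ x, x ^ 2 ∂(gaussianReal 0 (a ^ 2).toNNReal) = a ^ 2 := by
    have h := variance_fun_id_gaussianReal (μ := 0) (v := (a ^ 2).toNNReal)
    rw [variance_of_integral_eq_zero (by fun_prop) (by simp)] at h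
    rw [h, Real.coe_toNNReal _ (sq_nonneg a)]
  have hi2 : Integrable (fun x : ℝ => x ^ 2 / 2 * (1 / b ^ 2 - 1 / a ^ 2))
      (gaussianReal 0 (a ^ 2).toNNReal) := (hsq.div_const 2).mul_const _
  refine ⟨(integrable_const _).add hi2, ?_⟩
  unfold logRatio
  rw [integral_add (integrable_const _) hi2, integral_mul_const, integral_div, hint]
  simp only [integral_const, probReal_univ, one_smul]
  have := Real.log_le_sub_one_of_pos (div_pos hb ha)
  have e : (1 / 2 + b / a) * (a / b - 1) ^ 2
      = b / a - 1 + a ^ 2 / 2 * (1 / b ^ 2 - 1 / a ^ 2) := by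
    field_simp; ring
  rw [e]; linarith

/-! ### Finite products of Gaussian measures -/

/-- The law of `N` independent centered Gaussian variables with standard deviations `a i`. -/
noncomputable abbrev gaussPi {N : ℕ} (a : Fin N → ℝ) : Measure (Fin N → ℝ) :=
  Measure.pi (fun i => gaussianReal 0 ((a i ^ 2).toNNReal))

/-- The logarithm of the density of `gaussPi a` with respect to `gaussPi b`. -/
noncomputable def logLik {N : ℕ} (a b : Fin N → ℝ) (x : Fin N → ℝ) : ℝ :=
  ∑ i, logRatio (a i) (b i) (x i)

section FiniteDim

variable {N : ℕ} {a b : Fin N → ℝ}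

lemma measurable_logLik (a b : Fin N → ℝ) : Measurable (logLik a b) := by
  unfold logLik
  exact Finset.measurable_sum _ fun i _ => (measurable_logRatio _ _).comp (measurable_pi_apply i)

lemma logLik_swap (ha : ∀ i, 0 < a i) (hb : ∀ i, 0 < b i) (x : Fin N → ℝ) :
    logLik b a x = -logLik a b x := by
  simp [logLik, logRatio_swap (ha _) (hb _)]

lemma gaussPi_eq_withDensity (ha : ∀ i, 0 < a i) (hb : ∀ i, 0 < b i) :
    gaussPi a = (gaussPi b).withDensity (fun x => ENNReal.ofReal (Real.exp (logLik a b x))) := by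
  rw [gaussPi, pi_eq_withDensity_prod (fun i => gaussianReal 0 ((b i ^ 2).toNNReal)) _
    (fun i x => ENNReal.ofReal (Real.exp (logRatio (a i) (b i) x)))
    (fun i => ((measurable_logRatio _ _).exp).ennreal_ofReal)
    (fun i => gaussianReal_eq_withDensity (ha i) (hb i))]
  congr 1
  ext x
  rw [logLik, Real.exp_sum, ENNReal.ofReal_prod_of_nonneg fun i _ => (Real.exp_pos _).le]

lemma lintegral_exp_half_logLik_le (ha : ∀ i, 0 < a i) (hb : ∀ i, 0 < b i) :
    ∫⁻ x, ENNReal.ofReal (Real.exp (logLik a b x / 2)) ∂(gaussPi b)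
      ≤ ENNReal.ofReal
        (Real.exp (-(∑ i, (a i - b i) ^ 2 / (a i ^ 2 + b i ^ 2)) / 2)) := by
  have h : ∀ x : Fin N → ℝ, ENNReal.ofReal (Real.exp (logLik a b x / 2))
      = ∏ i, ENNReal.ofReal (Real.exp (logRatio (a i) (b i) (x i) / 2)) := by
    intro x
    rw [logLik, Finset.sum_div, Real.exp_sum,
      ENNReal.ofReal_prod_of_nonneg fun i _ => (Real.exp_pos _).le]
  simp_rw [h]
  rw [lintegral_pi_prod _ (fun i t => ENNReal.ofReal (Real.exp (logRatio (a i) (b i) t / 2)))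
    (fun i => (((measurable_logRatio _ _).div_const 2).exp).ennreal_ofReal),
    ← Finset.sum_neg_distrib, Finset.sum_div, Real.exp_sum,
    ENNReal.ofReal_prod_of_nonneg fun i _ => (Real.exp_pos _).le]
  exact Finset.prod_le_prod' fun i _ => lintegral_exp_half_logRatio_le (ha i) (hb i)

/-- The event that the likelihood ratio exceeds `1` separates the two finite products, up to an
error given by their Hellinger affinity: with `L = logLik a b`, one has `1 ≤ exp (L / 2)` on this
event, and `exp L ≤ exp (L / 2)` off it. -/
lemma gaussPi_separation (ha : ∀ i, 0 < a i) (hb : ∀ i, 0 < b i) :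
    gaussPi b {x | 0 < logLik a b x} ≤ ENNReal.ofReal
        (Real.exp (-(∑ i, (a i - b i) ^ 2 / (a i ^ 2 + b i ^ 2)) / 2)) ∧
    gaussPi a {x | 0 < logLik a b x}ᶜ ≤ ENNReal.ofReal
        (Real.exp (-(∑ i, (a i - b i) ^ 2 / (a i ^ 2 + b i ^ 2)) / 2)) := by
  have hL := measurable_logLik a b
  have hA : MeasurableSet {x | 0 < logLik a b x} := measurableSet_lt measurable_const hL
  constructor
  · refine le_trans ?_ (lintegral_exp_half_logLik_le ha hb)
    rw [← lintegral_indicator_one hA]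
    refine lintegral_mono fun x => Set.indicator_apply_le' (fun hx => ?_) fun _ => zero_le
    have hx' : 0 < logLik a b x := hx
    rw [Pi.one_apply, ENNReal.one_le_ofReal]
    exact Real.one_le_exp (by linarith)
  · refine le_trans ?_ (lintegral_exp_half_logLik_le ha hb)
    rw [gaussPi_eq_withDensity ha hb, withDensity_apply _ hA.compl]
    refine le_trans (setLIntegral_mono (by fun_prop) fun x hx => ?_) (setLIntegral_le_lintegral _ _)
    have hx' : logLik a b x ≤ 0 := not_lt.mp hx
    exact ENNReal.ofReal_le_ofReal (Real.exp_le_exp.mpr (by linarith))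

lemma integral_logLik_le (ha : ∀ i, 0 < a i) (hb : ∀ i, 0 < b i) :
    Integrable (logLik a b) (gaussPi a) ∧
    ∫ x, logLik a b x ∂(gaussPi a) ≤ ∑ i, (1 / 2 + b i / a i) * (a i / b i - 1) ^ 2 := by
  have hi : ∀ i, Integrable (fun x : Fin N → ℝ => logRatio (a i) (b i) (x i)) (gaussPi a) :=
    fun i => integrable_comp_eval (integral_logRatio_le (ha i) (hb i)).1
  refine ⟨integrable_finsetSum _ fun i _ => hi i, ?_⟩
  unfold logLik
  rw [integral_finsetSum _ fun i _ => hi i]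
  refine Finset.sum_le_sum fun i _ => ?_
  rw [integral_comp_eval (μ := fun i => gaussianReal 0 ((a i ^ 2).toNNReal)) (i := i)
    (measurable_logRatio (a i) (b i)).aestronglyMeasurable]
  exact (integral_logRatio_le (ha i) (hb i)).2

/-- `exp (-logLik a b)` is the density of `gaussPi b` with respect to `gaussPi a`, so its integral is the
total mass of `gaussPi b`. -/
lemma integral_exp_neg_logLik (ha : ∀ i, 0 < a i) (hb : ∀ i, 0 < b i) :
    Integrable (fun x => Real.exp (-logLik a b x)) (gaussPi a) ∧
    ∫ x, Real.exp (-logLik a b x) ∂(gaussPi a) = 1 := by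
  have hL := measurable_logLik a b
  have h : ∫⁻ x, ENNReal.ofReal (Real.exp (-logLik a b x)) ∂(gaussPi a) = 1 := by
    simp_rw [← logLik_swap ha hb]
    rw [← setLIntegral_univ, ← withDensity_apply _ MeasurableSet.univ,
      ← gaussPi_eq_withDensity hb ha, measure_univ]
  have hm : AEStronglyMeasurable (fun x => Real.exp (-logLik a b x)) (gaussPi a) :=
    hL.neg.exp.aestronglyMeasurable
  have h0 : 0 ≤ᵐ[gaussPi a] fun x => Real.exp (-logLik a b x) :=
    ae_of_all _ fun x => (Real.exp_pos _).le
  refine ⟨(lintegral_ofReal_ne_top_iff_integrable hm h0).1 (by simp [h]), ?_⟩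
  rw [integral_eq_lintegral_of_nonneg_ae h0 hm, h, ENNReal.toReal_one]

/-- A bound on the relative entropy gives a bound on `gaussPi a` by `gaussPi b` that does not
depend on the dimension: where `L = logLik a b` is below `K` the density is at most `exp K`,
and `K ≤ L` has `gaussPi a`-probability at most `(M + 1) / K`. -/
lemma gaussPi_apply_le (ha : ∀ i, 0 < a i) (hb : ∀ i, 0 < b i) {K M : ℝ} (hK : 0 < K)
    (hM : ∑ i, (1 / 2 + b i / a i) * (a i / b i - 1) ^ 2 ≤ M)
    {S : Set (Fin N → ℝ)} (hS : MeasurableSet S) :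
    gaussPi a S ≤ ENNReal.ofReal (Real.exp K) * gaussPi b S + ENNReal.ofReal ((M + 1) / K) := by
  have hL := measurable_logLik a b
  have hA : MeasurableSet {x | logLik a b x < K} := measurableSet_lt hL measurable_const
  have hsub : S ⊆ (S ∩ {x | logLik a b x < K}) ∪
      {x | K ≤ logLik a b x + Real.exp (-logLik a b x)} := by
    intro x hx
    by_cases h : logLik a b x < K
    · exact Or.inl ⟨hx, h⟩
    · have := Real.exp_pos (-logLik a b x)
      exact Or.inr (show K ≤ _ by linarith)
  refine (measure_mono hsub).trans ((measure_union_le _ _).trans (add_le_add ?_ ?_))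
  · rw [gaussPi_eq_withDensity ha hb, withDensity_apply _ (hS.inter hA)]
    calc _ ≤ ∫⁻ x in S ∩ {x | logLik a b x < K}, ENNReal.ofReal (Real.exp K) ∂(gaussPi b) :=
          setLIntegral_mono measurable_const fun x hx =>
            ENNReal.ofReal_le_ofReal (Real.exp_le_exp.mpr hx.2.le)
      _ = ENNReal.ofReal (Real.exp K) * gaussPi b (S ∩ {x | logLik a b x < K}) :=
          setLIntegral_const _ _
      _ ≤ _ := by gcongr; exact Set.inter_subset_left
  ·
    -- Adding `exp (-L)` makes the function nonnegative, as Markov's inequality requires, and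
    -- raises its integral by only `1`.
    obtain ⟨hi1, hle⟩ := integral_logLik_le ha hb
    obtain ⟨hi2, he⟩ := integral_exp_neg_logLik ha hb
    have hmk := mul_meas_ge_le_integral_of_nonneg (μ := gaussPi a)
      (f := fun x => logLik a b x + Real.exp (-logLik a b x))
      (ae_of_all _ fun x => by
        have := Real.add_one_le_exp (-logLik a b x)
        show 0 ≤ logLik a b x + Real.exp (-logLik a b x)
        linarith) (hi1.add hi2) K
    rw [integral_add hi1 hi2, he] at hmk
    rw [← ofReal_measureReal]
    refine ENNReal.ofReal_le_ofReal ?_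
    rw [le_div_iff₀ hK]
    linarith

end FiniteDim

/-! ### Absolute continuity from uniform bounds on the marginals -/

open scoped symmDiff in
/-- Absolute continuity on the sequence space follows from a quantitative form of it on the
finite-dimensional marginals that is uniform in the dimension, because measurable sets are
approximated by cylinders in `(ν1 + ν2)`-measure. -/
lemma absolutelyContinuous_of_marginals (ν1 ν2 : Measure (ℕ → ℝ))
    [IsProbabilityMeasure ν1] [IsProbabilityMeasure ν2]
    (h : ∀ ε : ℝ≥0∞, 0 < ε → ∃ C : ℝ≥0∞, C ≠ ∞ ∧ ∀ (N : ℕ) (S : Set (Fin N → ℝ)),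
      MeasurableSet S → ν1.map (fun x (i : Fin N) => x i) S
        ≤ C * ν2.map (fun x (i : Fin N) => x i) S + ε) : ν1 ≪ ν2 := by
  refine Measure.AbsolutelyContinuous.mk fun A hA hA0 => ?_
  refine le_antisymm (le_of_forall_pos_le_add fun η hη => ?_) zero_le
  rw [zero_add]
  have hε : 0 < η / 3 := ENNReal.div_pos hη.ne' (by simp)
  obtain ⟨C, hC, hbd⟩ := h (η / 3) hε
  have hδ : 0 < min (η / 3) (η / 3 / C) := lt_min hε (ENNReal.div_pos hε.ne' hC)
  obtain ⟨D, hD, hDA⟩ := exists_measure_symmDiff_lt_of_generateFrom_isSetRing (μ := ν1 + ν2)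
    (C := measurableCylinders fun _ : ℕ => ℝ) isSetRing_measurableCylinders
    ⟨{Set.univ}, by simp, by simpa using univ_mem_measurableCylinders fun _ : ℕ => ℝ, by simp⟩
    generateFrom_measurableCylinders.symm hA hδ
  rw [Measure.add_apply] at hDA
  have h1 : ν1 (D ∆ A) ≤ η / 3 :=
    (le_self_add.trans hDA.le).trans (min_le_left _ _)
  have h2 : ν2 (D ∆ A) ≤ η / 3 / C :=
    (le_add_self.trans hDA.le).trans (min_le_right _ _)
  -- A cylinder over a finite set `s` of coordinates depends on the first `N` of them only,
  -- as soon as `N` exceeds every element of `s`.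
  have hD1 : ν1 D ≤ C * ν2 D + η / 3 := by
    obtain ⟨s, S, hS, rfl⟩ := (mem_measurableCylinders _).1 hD
    obtain ⟨N, hN⟩ := s.exists_nat_subset_range
    have hN' : ∀ i : s, (i : ℕ) < N := fun i => Finset.mem_range.1 (hN i.2)
    let g : (Fin N → ℝ) → (s → ℝ) := fun y i => y ⟨i, hN' i⟩
    have hg : Measurable g := by fun_prop
    have hp : Measurable fun (x : ℕ → ℝ) (i : Fin N) => x i := by fun_prop
    have := hbd N (g ⁻¹' S) (hg hS)
    rwa [Measure.map_apply hp (hg hS), Measure.map_apply hp (hg hS)] at this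
  have hA1 : ν1 A ≤ ν1 D + ν1 (D ∆ A) := by
    refine (measure_mono fun x hx => ?_).trans (measure_union_le _ _)
    by_cases hxD : x ∈ D
    · exact Or.inl hxD
    · exact Or.inr (Or.inr ⟨hx, hxD⟩)
  have hD2 : ν2 D ≤ ν2 A + ν2 (D ∆ A) := by
    refine (measure_mono fun x hx => ?_).trans (measure_union_le _ _)
    by_cases hxA : x ∈ A
    · exact Or.inl hxA
    · exact Or.inr (Or.inl ⟨hx, hxA⟩)
  rw [hA0, zero_add] at hD2
  calc ν1 A ≤ (C * (η / 3 / C) + η / 3) + η / 3 :=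
        hA1.trans (add_le_add (hD1.trans (by gcongr; exact hD2.trans h2)) h1)
    _ ≤ η / 3 + η / 3 + η / 3 := by gcongr; exact ENNReal.mul_div_le
    _ = η := ENNReal.add_thirds η

/-! ### Summability and the two implications -/

lemma eventually_ratio_of_summable {σ1 σ2 : ℕ → ℝ}
    (hs : Summable (fun n => (σ1 n / σ2 n - 1) ^ 2)) :
    ∀ᶠ n in atTop, 1 / 2 < σ1 n / σ2 n := by
  filter_upwards [hs.tendsto_atTop_zero.eventually_lt_const (show (0 : ℝ) < 1 / 4 by norm_num)]
    with n hn
  nlinarith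

lemma summable_swap {σ1 σ2 : ℕ → ℝ} (hσ1 : ∀ n, 0 < σ1 n) (hσ2 : ∀ n, 0 < σ2 n)
    (hs : Summable (fun n => (σ1 n / σ2 n - 1) ^ 2)) :
    Summable (fun n => (σ2 n / σ1 n - 1) ^ 2) := by
  refine (hs.mul_left 4).of_norm_bounded_eventually_nat ?_
  filter_upwards [eventually_ratio_of_summable hs] with n hn
  have h1 := hσ1 n
  have h2 := hσ2 n
  have e : (σ2 n / σ1 n - 1) ^ 2 = (σ2 n / σ1 n) ^ 2 * (σ1 n / σ2 n - 1) ^ 2 := by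
    field_simp; ring
  rw [Real.norm_of_nonneg (sq_nonneg _), e]
  have h3 : σ2 n / σ1 n ≤ 2 := by
    rw [lt_div_iff₀ h2] at hn
    rw [div_le_iff₀ h1]; linarith
  have h4 : 0 < σ2 n / σ1 n := by positivity
  gcongr
  nlinarith

lemma absolutelyContinuous_of_summable {σ1 σ2 : ℕ → ℝ} (hσ1 : ∀ n, 0 < σ1 n)
    (hσ2 : ∀ n, 0 < σ2 n) (ν1 ν2 : Measure (ℕ → ℝ))
    [IsProbabilityMeasure ν1] [IsProbabilityMeasure ν2]
    (hν1 : ∀ N : ℕ, ν1.map (fun x (i : Fin N) => x i) = gaussPi fun i : Fin N => σ1 i)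
    (hν2 : ∀ N : ℕ, ν2.map (fun x (i : Fin N) => x i) = gaussPi fun i : Fin N => σ2 i)
    (hs : Summable (fun n => (σ1 n / σ2 n - 1) ^ 2)) : ν1 ≪ ν2 := by
  have hsum : Summable (fun n => (1 / 2 + σ2 n / σ1 n) * (σ1 n / σ2 n - 1) ^ 2) := by
    refine (hs.mul_left (5 / 2)).of_norm_bounded_eventually_nat ?_
    filter_upwards [eventually_ratio_of_summable hs] with n hn
    have h1 := hσ1 n
    have h2 := hσ2 n
    rw [Real.norm_of_nonneg (by positivity)]
    have h3 : σ2 n / σ1 n ≤ 2 := by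
      rw [lt_div_iff₀ h2] at hn
      rw [div_le_iff₀ h1]; linarith
    gcongr
    linarith
  set M := ∑' n, (1 / 2 + σ2 n / σ1 n) * (σ1 n / σ2 n - 1) ^ 2 with hMdef
  have hpos : ∀ n, 0 ≤ (1 / 2 + σ2 n / σ1 n) * (σ1 n / σ2 n - 1) ^ 2 := fun n => by
    have h1 := hσ1 n
    have h2 := hσ2 n
    positivity
  have hM0 : 0 ≤ M := tsum_nonneg hpos
  refine absolutelyContinuous_of_marginals ν1 ν2 fun ε hε => ?_
  obtain ⟨e, he0, heε⟩ : ∃ e : ℝ, 0 < e ∧ ENNReal.ofReal e ≤ ε := by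
    obtain ⟨q, hq0, hqε⟩ := ENNReal.lt_iff_exists_nnreal_btwn.1 hε
    exact ⟨q, by simpa using hq0, by simpa using hqε.le⟩
  -- With this truncation level `K`, the error term `(M + 1) / K` of `gaussPi_apply_le` equals `e`.
  have hK : 0 < (M + 1) / e := by positivity
  refine ⟨ENNReal.ofReal (Real.exp ((M + 1) / e)), ENNReal.ofReal_ne_top, fun N S hS => ?_⟩
  rw [hν1, hν2]
  refine (gaussPi_apply_le (fun i => hσ1 i) (fun i => hσ2 i) hK (M := M) ?_ hS).trans ?_
  · rw [Fin.sum_univ_eq_sum_range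
      (fun n => (1 / 2 + σ2 n / σ1 n) * (σ1 n / σ2 n - 1) ^ 2) N]
    exact hsum.sum_le_tsum _ fun n _ => hpos n
  · have : (M + 1) / ((M + 1) / e) = e := by field_simp
    rw [this]
    gcongr

/-- If the Hellinger defects are summable they tend to `0`, which forces `σ1 n / σ2 n` to be
eventually at most `2`; the denominators `σ1 n ^ 2 + σ2 n ^ 2` and `σ2 n ^ 2` are then comparable. -/
lemma summable_of_summable_hellinger {σ1 σ2 : ℕ → ℝ} (hσ1 : ∀ n, 0 < σ1 n) (hσ2 : ∀ n, 0 < σ2 n)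
    (hs : Summable (fun n => (σ1 n - σ2 n) ^ 2 / (σ1 n ^ 2 + σ2 n ^ 2))) :
    Summable (fun n => (σ1 n / σ2 n - 1) ^ 2) := by
  refine (hs.mul_left 5).of_norm_bounded_eventually_nat ?_
  filter_upwards [hs.tendsto_atTop_zero.eventually_lt_const (show (0 : ℝ) < 1 / 5 by norm_num)]
    with n hn
  have h1 := hσ1 n
  have h2 := hσ2 n
  rw [div_lt_iff₀ (by positivity)] at hn
  have h3 : σ1 n ≤ 2 * σ2 n := by nlinarith
  have e : (σ1 n / σ2 n - 1) ^ 2 = (σ1 n - σ2 n) ^ 2 / σ2 n ^ 2 := by field_simp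
  rw [Real.norm_of_nonneg (sq_nonneg _), e, ← mul_div_assoc,
    div_le_div_iff₀ (by positivity) (by positivity)]
  have : σ1 n ^ 2 + σ2 n ^ 2 ≤ 5 * σ2 n ^ 2 := by nlinarith
  nlinarith [mul_le_mul_of_nonneg_left this (sq_nonneg (σ1 n - σ2 n))]

/-- If the series diverges, the Hellinger affinities of the marginals tend to `0`, so some event
has `ν2`-measure arbitrarily small and `ν1`-measure above `1 / 2`. -/
lemma summable_of_absolutelyContinuous {σ1 σ2 : ℕ → ℝ} (hσ1 : ∀ n, 0 < σ1 n)
    (hσ2 : ∀ n, 0 < σ2 n) (ν1 ν2 : Measure (ℕ → ℝ))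
    [IsProbabilityMeasure ν1] [IsProbabilityMeasure ν2]
    (hν1 : ∀ N : ℕ, ν1.map (fun x (i : Fin N) => x i) = gaussPi fun i : Fin N => σ1 i)
    (hν2 : ∀ N : ℕ, ν2.map (fun x (i : Fin N) => x i) = gaussPi fun i : Fin N => σ2 i)
    (hac : ν1 ≪ ν2) : Summable (fun n => (σ1 n / σ2 n - 1) ^ 2) := by
  refine summable_of_summable_hellinger hσ1 hσ2 ?_
  by_contra hns
  have hdiv := (not_summable_iff_tendsto_nat_atTop_of_nonneg
    (fun n => by positivity)).1 hns
  have hlim : Tendsto (fun N : ℕ => ENNReal.ofReal (Real.exp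
      (-(∑ n ∈ Finset.range N, (σ1 n - σ2 n) ^ 2 / (σ1 n ^ 2 + σ2 n ^ 2)) / 2))) atTop
      (nhds 0) := by
    rw [← ENNReal.ofReal_zero]
    refine ENNReal.tendsto_ofReal (Real.tendsto_exp_atBot.comp ?_)
    exact (tendsto_neg_atTop_atBot.comp hdiv).atBot_div_const two_pos
  obtain ⟨δ, hδ0, hδ⟩ := exists_pos_setLIntegral_lt_of_measure_lt (μ := ν2)
    (f := ν1.rnDeriv ν2) (Measure.lintegral_rnDeriv_lt_top ν1 ν2).ne
    (show (1 / 2 : ℝ≥0∞) ≠ 0 by simp)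
  obtain ⟨N, hN⟩ := (hlim.eventually_lt_const
    (show (0 : ℝ≥0∞) < min δ (1 / 2) from lt_min hδ0 (by simp))).exists
  rw [← Fin.sum_univ_eq_sum_range
    (fun n => (σ1 n - σ2 n) ^ 2 / (σ1 n ^ 2 + σ2 n ^ 2)) N] at hN
  obtain ⟨hsep2, hsep1⟩ := gaussPi_separation (a := fun i : Fin N => σ1 i)
    (b := fun i : Fin N => σ2 i) (fun i => hσ1 i) (fun i => hσ2 i)
  set B : Set (Fin N → ℝ) := {x | 0 < logLik (fun i : Fin N => σ1 i) (fun i : Fin N => σ2 i) x}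
  have hB : MeasurableSet B := measurableSet_lt measurable_const (measurable_logLik _ _)
  have hp : Measurable fun (x : ℕ → ℝ) (i : Fin N) => x i := by fun_prop
  rw [← hν2, Measure.map_apply hp hB] at hsep2
  rw [← hν1, Measure.map_apply hp hB.compl, Set.preimage_compl] at hsep1
  have h1 := hδ _ ((hsep2.trans_lt hN).trans_le (min_le_left _ _))
  rw [Measure.setLIntegral_rnDeriv hac] at h1
  have h2 := (hsep1.trans_lt hN).trans_le (min_le_right _ _)
  have h3 := ENNReal.add_lt_add h1 h2
  rw [measure_add_measure_compl (hp hB), measure_univ, ENNReal.add_halves] at h3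
  exact lt_irrefl _ h3

/-- Two infinite products of centered Gaussian measures with variances `σ1 n ^ 2` and
`σ2 n ^ 2` are mutually absolutely continuous if and only if
`∑ (σ1 n / σ2 n - 1)^2 < ∞`. -/
theorem gaussian_product_equivalent_iff
    (σ1 σ2 : ℕ → ℝ) (hσ1 : ∀ n, 0 < σ1 n) (hσ2 : ∀ n, 0 < σ2 n)
    (ν1 ν2 : Measure (ℕ → ℝ))
    [IsProbabilityMeasure ν1] [IsProbabilityMeasure ν2]
    (hν1 : ∀ N : ℕ, Measure.map (fun x (i : Fin N) => x i) ν1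
      = Measure.pi (fun i : Fin N => gaussianReal 0 ((σ1 i ^ 2).toNNReal)))
    (hν2 : ∀ N : ℕ, Measure.map (fun x (i : Fin N) => x i) ν2
      = Measure.pi (fun i : Fin N => gaussianReal 0 ((σ2 i ^ 2).toNNReal))) :
    (ν1 ≪ ν2 ∧ ν2 ≪ ν1) ↔ Summable (fun n => (σ1 n / σ2 n - 1) ^ 2) := by
  constructor
  · rintro ⟨h, -⟩
    exact summable_of_absolutelyContinuous hσ1 hσ2 ν1 ν2 hν1 hν2 h
  · intro hs
    exact ⟨absolutelyContinuous_of_summable hσ1 hσ2 ν1 ν2 hν1 hν2 hs,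
      absolutelyContinuous_of_summable hσ2 hσ1 ν2 ν1 hν2 hν1 (summable_swap hσ1 hσ2 hs)⟩
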